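/- arXiv:2304.03319 — 6 statements merged into one kernel-verified Lean document; each statement's English description precedes it below -/
import Mathlib

section
/- Let f, f_n : [0,∞) → [0,∞) (n ∈ ℕ) be non-decreasing, unbounded, right-continuous functions, and assume f is strictly increasing. If f_n converges to f locally uniformly, then the right-continuous inverses converge locally uniformly: for every y ≥ 0, sup_{0 ≤ x ≤ y} |f_n→(x) − f→(x)| → 0 as n → ∞. -/
open Set Filter Metric Topology

/-- `f : ℝ → ℝ` represents a non-decreasing, unbounded, right-continuous function
`[0,∞) → [0,∞)`: it is nonnegative, monotone, unbounded and right-continuous on `[0,∞)`. -/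
def IsNDRC (f : ℝ → ℝ) : Prop :=
  (∀ s : ℝ, 0 ≤ s → 0 ≤ f s) ∧ MonotoneOn f (Set.Ici 0) ∧
    (∀ M : ℝ, ∃ s : ℝ, 0 ≤ s ∧ M < f s) ∧
    (∀ s : ℝ, 0 ≤ s → ContinuousWithinAt f (Set.Ici s) s)

/-- The right-continuous inverse `f→(x) = inf {t ≥ 0 : f t > x}`. -/
noncomputable def rcInv (f : ℝ → ℝ) (x : ℝ) : ℝ :=
  sInf {t : ℝ | 0 ≤ t ∧ x < f t}

theorem rcInv_le_aux {f : ℝ → ℝ} {x t : ℝ} (ht : 0 ≤ t) (h : x < f t) : rcInv f x ≤ t :=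
  csInf_le ⟨0, fun _ hs => hs.1⟩ ⟨ht, h⟩

theorem rcInv_nonneg_aux (f : ℝ → ℝ) (x : ℝ) : 0 ≤ rcInv f x :=
  Real.sInf_nonneg fun _ hs => hs.1

theorem le_rcInv_aux {f : ℝ → ℝ} (hf : IsNDRC f) {x t : ℝ} (ht : 0 ≤ t) (h : f t ≤ x) :
    t ≤ rcInv f x := by
  obtain ⟨s, hs0, hs⟩ := hf.2.2.1 x
  refine le_csInf ⟨s, hs0, hs⟩ ?_
  rintro u ⟨hu0, hu⟩
  by_contra! hut
  have := hf.2.1 (mem_Ici.2 hu0) (mem_Ici.2 ht) hut.le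
  linarith

theorem lt_of_rcInv_lt_aux {f : ℝ → ℝ} (hf : IsNDRC f) {x t : ℝ} (h : rcInv f x < t) :
    x < f t := by
  by_contra! hc
  have := le_rcInv_aux hf ((rcInv_nonneg_aux f x).trans h.le) hc
  linarith

theorem rcInv_continuous_aux {f : ℝ → ℝ} (hf : IsNDRC f) (hs : StrictMonoOn f (Set.Ici 0)) :
    Continuous (rcInv f) := by
  rw [continuous_iff_continuousAt]
  intro x
  have h0 := rcInv_nonneg_aux f x
  refine tendsto_order.2 ⟨fun b hb => ?_, fun b hb => ?_⟩
  · rcases lt_or_ge b 0 with hb0 | hb0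
    · exact Eventually.of_forall fun z => hb0.trans_le (rcInv_nonneg_aux f z)
    · obtain ⟨c, hbc, hc⟩ := exists_between hb
      obtain ⟨d, hcd, hd⟩ := exists_between hc
      have hfd : f d ≤ x := by
        by_contra! h
        have := rcInv_le_aux (by linarith) h
        linarith
      have hcd' : f c < f d := hs (mem_Ici.2 (by linarith)) (mem_Ici.2 (by linarith)) hcd
      filter_upwards [lt_mem_nhds (hcd'.trans_le hfd)] with z hz
      exact hbc.trans_le (le_rcInv_aux hf (by linarith) hz.le)
  · obtain ⟨c, hc, hcb⟩ := exists_between hb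
    filter_upwards [gt_mem_nhds (lt_of_rcInv_lt_aux hf hc)] with z hz
    exact (rcInv_le_aux (by linarith) hz).trans_lt hcb

/-- If `fn` are non-decreasing, unbounded, right-continuous functions
`[0,∞) → [0,∞)` converging locally uniformly to such a function `f` which is strictly
increasing, then the right-continuous inverses converge locally uniformly:
for every `y ≥ 0`, `sup_{0 ≤ x ≤ y} |fn→(x) − f→(x)| → 0`. -/
theorem stmt1 (f : ℝ → ℝ) (fn : ℕ → ℝ → ℝ)
    (hf : IsNDRC f) (hfn : ∀ n, IsNDRC (fn n))
    (hstrict : StrictMonoOn f (Set.Ici 0))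
    (hconv : ∀ t : ℝ, 0 ≤ t → TendstoUniformlyOn fn f atTop (Set.Icc 0 t)) :
    ∀ y : ℝ, 0 ≤ y →
      TendstoUniformlyOn (fun n => rcInv (fn n)) (rcInv f) atTop (Set.Icc 0 y) := by
  intro y hy
  rw [Metric.tendstoUniformlyOn_iff]
  intro ε hε
  have huc := (isCompact_Icc (a := (-1 : ℝ)) (b := y + 1)).uniformContinuousOn_of_continuous
    (rcInv_continuous_aux hf hstrict).continuousOn
  obtain ⟨δ₀, hδ₀, hδ⟩ := Metric.uniformContinuousOn_iff.1 huc ε hε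
  obtain ⟨δ, hδ0, hδ1⟩ := exists_between (lt_min hδ₀ one_pos)
  obtain ⟨hδa, hδb⟩ := lt_min_iff.1 hδ1
  obtain ⟨T, hT0, hT⟩ := hf.2.2.1 (y + 1)
  filter_upwards [Metric.tendstoUniformlyOn_iff.1 (hconv (T + 1) (by linarith)) δ hδ0]
    with n hn x hx
  obtain ⟨hx0, hxy⟩ := hx
  have hn' : ∀ t, 0 ≤ t → t ≤ T + 1 → f t - δ < fn n t ∧ fn n t < f t + δ := by
    intro t h1 h2
    have := hn t ⟨h1, h2⟩
    rw [Real.dist_eq, abs_lt] at this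
    constructor <;> linarith
  have hup : rcInv (fn n) x ≤ rcInv f (x + δ) := by
    refine le_of_forall_gt_imp_ge_of_dense fun s hs => ?_
    have hgT : rcInv f (x + δ) ≤ T := rcInv_le_aux hT0 (by linarith)
    have hlt : rcInv f (x + δ) < min s (T + 1) := lt_min hs (by linarith)
    have h0 := (rcInv_nonneg_aux f (x + δ)).trans hlt.le
    have h1 := lt_of_rcInv_lt_aux hf hlt
    have h2 := hn' _ h0 (min_le_right _ _)
    exact (rcInv_le_aux h0 (by linarith)).trans (min_le_left _ _)
  have hlo : rcInv f (x - δ) ≤ rcInv (fn n) x := by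
    refine le_of_forall_gt_imp_ge_of_dense fun s hs => ?_
    have hgT : rcInv (fn n) x ≤ T := rcInv_le_aux hT0 (by
      have := hn' T hT0 (by linarith)
      linarith)
    have hlt : rcInv (fn n) x < min s (T + 1) := lt_min hs (by linarith)
    have h0 := (rcInv_nonneg_aux (fn n) x).trans hlt.le
    have h1 := lt_of_rcInv_lt_aux (hfn n) hlt
    have h2 := hn' _ h0 (min_le_right _ _)
    exact (rcInv_le_aux h0 (by linarith)).trans (min_le_left _ _)
  have hxm : x ∈ Icc (-1 : ℝ) (y + 1) := ⟨by linarith, by linarith⟩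
  have ha := hδ x hxm (x + δ) ⟨by linarith, by linarith⟩ (by
    rw [Real.dist_eq, abs_lt]; constructor <;> linarith)
  have hb := hδ x hxm (x - δ) ⟨by linarith, by linarith⟩ (by
    rw [Real.dist_eq, abs_lt]; constructor <;> linarith)
  rw [Real.dist_eq, abs_lt] at ha hb ⊢
  constructor <;> linarith
end

section
/- Let f, f_n : [0,∞) → [0,∞) (n ∈ ℕ) be non-decreasing, unbounded, right-continuous functions, and assume f is strictly increasing. Let F and F_n denote the closed ranges of f and f_n respectively. If f_n converges to f locally uniformly, then for every sequence of real numbers x_n → x one has ρ(x_n, F_n) → ρ(x, F) as n → ∞. -/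
open Set Filter Metric Topology

/-- The closed range `F = closure {f t : t ≥ 0}`. -/
def crange (f : ℝ → ℝ) : Set ℝ := closure (f '' Set.Ici 0)

/-- If `fn` are non-decreasing, unbounded, right-continuous functions
`[0,∞) → [0,∞)` converging locally uniformly to such a function `f` which is strictly
increasing, and `xn → x`, then `ρ(xn, Fn) → ρ(x, F)` where `Fn`, `F` are the closed ranges. -/
theorem stmt2 (f : ℝ → ℝ) (fn : ℕ → ℝ → ℝ)
    (hf : IsNDRC f) (hfn : ∀ n, IsNDRC (fn n))
    (hstrict : StrictMonoOn f (Set.Ici 0))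
    (hconv : ∀ t : ℝ, 0 ≤ t → TendstoUniformlyOn fn f atTop (Set.Icc 0 t)) :
    ∀ (x : ℝ) (xn : ℕ → ℝ), Tendsto xn atTop (𝓝 x) →
      Tendsto (fun n => Metric.infDist (xn n) (crange (fn n))) atTop
        (𝓝 (Metric.infDist x (crange f))) := by
  intro x xn hx
  have hne : ∀ g : ℝ → ℝ, (g '' Set.Ici 0).Nonempty := fun g => ⟨g 0, 0, by simp, rfl⟩
  simp only [crange, Metric.infDist_closure]
  obtain ⟨T, hT0, hT⟩ := hf.2.2.1 x
  have hle : ∀ s : ℝ, 0 ≤ s → Metric.infDist x (f '' Set.Ici 0) ≤ |x - f s| := by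
    intro s hs
    rw [← Real.dist_eq]
    exact Metric.infDist_le_dist_of_mem ⟨s, hs, rfl⟩
  rw [Metric.tendsto_atTop]
  intro ε hε
  obtain ⟨y, ⟨s, hs, rfl⟩, hy⟩ := (Metric.infDist_lt_iff (hne f)).1
    (show Metric.infDist x (f '' Set.Ici 0) < Metric.infDist x (f '' Set.Ici 0) + ε / 4 by linarith)
  have hs0 : (0 : ℝ) ≤ s := hs
  have h1 := Metric.tendstoUniformlyOn_iff.1 (hconv T hT0) (ε / 4) (by linarith)
  have h2 := Metric.tendstoUniformlyOn_iff.1 (hconv s hs0) (ε / 4) (by linarith)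
  have h3 := (Metric.tendsto_nhds.1 hx) (ε / 4) (by linarith)
  obtain ⟨N, hN⟩ := eventually_atTop.1 (h1.and (h2.and h3))
  refine ⟨N, fun n hn => ?_⟩
  obtain ⟨a1, a2, a3⟩ := hN n hn
  rw [Real.dist_eq] at a3 hy
  have b2 := a2 s ⟨hs0, le_rfl⟩
  rw [Real.dist_eq] at b2
  have up : Metric.infDist (xn n) (fn n '' Set.Ici 0) ≤ |xn n - fn n s| := by
    rw [← Real.dist_eq]
    exact Metric.infDist_le_dist_of_mem ⟨s, hs, rfl⟩
  have lo : Metric.infDist x (f '' Set.Ici 0) - ε / 2 ≤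
      Metric.infDist (xn n) (fn n '' Set.Ici 0) := by
    rw [Metric.le_infDist (hne (fn n))]
    rintro _ ⟨r, hr, rfl⟩
    have hr0 : (0 : ℝ) ≤ r := hr
    rw [Real.dist_eq]
    rcases le_total r T with h | h
    · have b1 := a1 r ⟨hr0, h⟩
      rw [Real.dist_eq] at b1
      have := hle r hr0
      grind
    · have b1 := a1 T ⟨hT0, le_rfl⟩
      rw [Real.dist_eq] at b1
      have c := (hfn n).2.1 (show T ∈ Set.Ici 0 from hT0) hr h
      have := hle T hT0
      rw [abs_of_neg (by linarith)] at this
      have d1 := neg_abs_le (xn n - fn n r)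
      have d2 := le_abs_self (xn n - x)
      have d3 := le_abs_self (f T - fn n T)
      have d4 := neg_le_abs (xn n - fn n r)
      linarith
  rw [Real.dist_eq, abs_lt]
  constructor
  · linarith
  · grind
end

section
/- Let f, f_n : [0,∞) → [0,∞) (n ∈ ℕ) be non-decreasing, unbounded, right-continuous functions, and let F and F_n denote the closed ranges of f and f_n respectively. If f_n converges to f locally uniformly, then for every x ∈ ℝ, limsup_{n→∞} ρ(x, F_n) ≤ ρ(x, F). -/
open Set Filter Metric Topology

/-- If `fn` are non-decreasing, unbounded, right-continuous functions
`[0,∞) → [0,∞)` converging locally uniformly to such a function `f`, then for every `x`,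
`limsup_n ρ(x, Fn) ≤ ρ(x, F)`. -/
theorem stmt3 (f : ℝ → ℝ) (fn : ℕ → ℝ → ℝ)
    (hf : IsNDRC f) (hfn : ∀ n, IsNDRC (fn n))
    (hconv : ∀ t : ℝ, 0 ≤ t → TendstoUniformlyOn fn f atTop (Set.Icc 0 t)) :
    ∀ x : ℝ,
      Filter.limsup (fun n => Metric.infDist x (crange (fn n))) atTop
        ≤ Metric.infDist x (crange f) := by
  intro x
  apply le_of_forall_pos_le_add
  intro e he
  have hne : (f '' Set.Ici 0).Nonempty := ⟨f 0, 0, by simp, rfl⟩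
  obtain ⟨y, ⟨t, ht, rfl⟩, hy⟩ := (Metric.infDist_lt_iff hne).1
    (show Metric.infDist x (f '' Set.Ici 0) < Metric.infDist x (f '' Set.Ici 0) + e / 2 by linarith)
  have ht0 : (0 : ℝ) ≤ t := ht
  have hev := (Metric.tendstoUniformlyOn_iff.1 (hconv t ht0)) (e / 2) (by linarith)
  refine Filter.limsup_le_of_le ?_ ?_
  · exact Filter.isCoboundedUnder_le_of_le atTop (x := 0) (fun n => Metric.infDist_nonneg)
  · filter_upwards [hev] with n hn
    have h1 := hn t ⟨ht0, le_rfl⟩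
    have h2 : Metric.infDist x (fn n '' Set.Ici 0) ≤ dist x (fn n t) :=
      Metric.infDist_le_dist_of_mem ⟨t, ht, rfl⟩
    have h3 := dist_triangle x (f t) (fn n t)
    simp only [crange, Metric.infDist_closure]
    linarith
end

section
/- Let f : [0,∞) → [0,∞) be a non-decreasing, unbounded, right-continuous function with closed range F, let x ∈ ℝ and δ > 0, and suppose ρ(x, F) > δ. Then either x < f(0) − δ, or there exists t > 0 such that f(t−) + δ < x < f(t) − δ, where f(t−) := lim_{s↑t} f(s) denotes the left limit of f at t. -/
open Set Filter Metric Topology Function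

/-- Let `f` be a non-decreasing, unbounded, right-continuous function
`[0,∞) → [0,∞)` with closed range `F`, let `x ∈ ℝ` and `δ > 0`, and suppose
`ρ(x, F) > δ`.  Then either `x < f 0 − δ`, or there exists `t > 0` such that
`f(t−) + δ < x < f(t) − δ`, where `f(t−)` is the left limit of `f` at `t`. -/
theorem stmt5 (f : ℝ → ℝ) (hf : IsNDRC f) (x δ : ℝ) (hδ : 0 < δ)
    (hdist : δ < Metric.infDist x (crange f)) :
    x < f 0 - δ ∨ ∃ t : ℝ, 0 < t ∧ Function.leftLim f t + δ < x ∧ x < f t - δ := by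
  obtain ⟨-, hmono, hunb, hrc⟩ := hf
  set d := Metric.infDist x (crange f) with hd
  have hgap : ∀ s : ℝ, 0 ≤ s → d ≤ |x - f s| := by
    intro s hs
    have h := Metric.infDist_le_dist_of_mem (x := x)
      (show f s ∈ crange f from subset_closure ⟨s, hs, rfl⟩)
    rwa [Real.dist_eq] at h
  have hlow : ∀ s : ℝ, 0 ≤ s → f s ≤ x → f s ≤ x - d := by
    intro s hs h
    have := hgap s hs
    rw [abs_of_nonneg (by linarith)] at this
    linarith
  have hhigh : ∀ s : ℝ, 0 ≤ s → x < f s → x + d ≤ f s := by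
    intro s hs h
    have := hgap s hs
    rw [abs_of_neg (by linarith)] at this
    linarith
  rcases lt_or_ge x (f 0) with h0 | h0
  · left
    have := hhigh 0 le_rfl h0
    linarith
  right
  let A : Set ℝ := {s | 0 ≤ s ∧ x < f s}
  have hne : A.Nonempty := hunb x
  have hbdd : BddBelow A := ⟨0, fun s hs => hs.1⟩
  have ht0 : 0 ≤ sInf A := le_csInf hne fun s hs => hs.1
  have hxt : x < f (sInf A) := by
    by_contra hcon
    have h1 := hlow _ ht0 (not_lt.mp hcon)
    have h2 : ∀ᶠ s in 𝓝[≥] (sInf A), f s < x :=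
      (hrc _ ht0).eventually_lt_const (by linarith)
    obtain ⟨u, hu, hsub⟩ := (mem_nhdsGE_iff_exists_Ico_subset).1 h2
    obtain ⟨s, hs, hsu⟩ := exists_lt_of_csInf_lt hne hu
    have h3 : f s < x := hsub ⟨csInf_le hbdd hs, hsu⟩
    exact absurd hs.2 (not_lt.mpr h3.le)
  have htpos : 0 < sInf A := by
    rcases ht0.lt_or_eq with h | h
    · exact h
    · rw [← h] at hxt
      linarith
  have hbelow : ∀ s ∈ Ioo 0 (sInf A), f s ≤ x - d := by
    intro s hs
    refine hlow s hs.1.le (not_lt.mp fun h => ?_)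
    exact absurd (csInf_le hbdd (show s ∈ A from ⟨hs.1.le, h⟩)) (not_le.mpr hs.2)
  refine ⟨sInf A, htpos, ?_, ?_⟩
  · have hlim : Tendsto f (𝓝[<] (sInf A)) (𝓝 (sSup (f '' Ioo 0 (sInf A)))) := by
      refine MonotoneOn.tendsto_nhdsWithin_Ioo_left (nonempty_Ioo.2 htpos)
        (hmono.mono fun s hs => hs.1.le) ⟨x - d, ?_⟩
      rintro _ ⟨s, hs, rfl⟩
      exact hbelow s hs
    rw [leftLim_eq_of_tendsto hlim]
    have : sSup (f '' Ioo 0 (sInf A)) ≤ x - d := by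
      refine csSup_le ((nonempty_Ioo.2 htpos).image f) ?_
      rintro _ ⟨s, hs, rfl⟩
      exact hbelow s hs
    linarith
  · have := hhigh _ ht0 hxt
    linarith
end

section
/- Let j ∈ ℕ, α > 0, and let Γ be a random variable with the Gamma(j,1) distribution. Let A ≥ 0 be a random variable independent of Γ with E[A^{jα+δ}] < ∞ for some δ > 0. Then lim_{x→∞} x^{jα} · P(A·Γ^{−1/α} > x) = E[A^{jα}]/j!. -/
open Set Filter Topology MeasureTheory ProbabilityTheory

lemma gamma_ae_pos (a r : ℝ) : ∀ᵐ g ∂(gammaMeasure a r), 0 < g := by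
  have h1 : ∀ᵐ g ∂(gammaMeasure a r), g ≠ 0 :=
    (withDensity_absolutelyContinuous volume (gammaPDF a r)).ae_le (Measure.ae_ne volume 0)
  have h2 : gammaMeasure a r (Iio 0) = 0 := by
    rw [gammaMeasure, withDensity_apply _ measurableSet_Iio,
      setLIntegral_congr_fun measurableSet_Iio (g := fun _ => 0)]
    · simp
    · intro x hx
      exact gammaPDF_of_neg hx
  have h3 : ∀ᵐ g ∂(gammaMeasure a r), ¬ g < 0 := by
    rw [ae_iff]; simp only [not_not]; exact h2
  filter_upwards [h1, h3] with g hg hg'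
  exact lt_of_le_of_ne (not_lt.1 hg') hg.symm

lemma gamma_Iio_bounds (j : ℕ) (hj : 0 < j) (t : ℝ) (ht : 0 ≤ t) :
    Real.exp (-t) * (t ^ j / (Nat.factorial j : ℝ)) ≤ (gammaMeasure (j : ℝ) 1 (Iio t)).toReal ∧
    (gammaMeasure (j : ℝ) 1 (Iio t)).toReal ≤ t ^ j / (Nat.factorial j : ℝ) := by
  have hj' : (0 : ℝ) < j := by exact_mod_cast hj
  haveI := isProbabilityMeasure_gammaMeasure hj' one_pos
  have hna : (gammaMeasure (j : ℝ) 1) (Iio t) = (gammaMeasure (j : ℝ) 1) (Iic t) := by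
    apply measure_congr
    have h1 : ∀ᵐ g ∂(gammaMeasure (j : ℝ) 1), g ≠ t :=
      (withDensity_absolutelyContinuous volume (gammaPDF j 1)).ae_le (Measure.ae_ne volume t)
    filter_upwards [h1] with g hg
    apply propext
    exact ⟨fun h => le_of_lt h, fun h => lt_of_le_of_ne h hg⟩
  obtain ⟨k, rfl⟩ : ∃ k, j = k + 1 := ⟨j - 1, by omega⟩
  have hF : (gammaMeasure ((k + 1 : ℕ) : ℝ) 1 (Iio t)).toReal
      = ∫ u in (0 : ℝ)..t, u ^ k * Real.exp (-u) / (Nat.factorial k : ℝ) := by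
    rw [hna, ← measureReal_def, ← cdf_eq_real, cdf_gammaMeasure_eq_integral hj' one_pos,
      intervalIntegral.integral_of_le ht]
    rw [setIntegral_eq_of_subset_of_forall_sdiff_eq_zero (s := Icc 0 t) measurableSet_Iic
      (fun x hx => hx.2)]
    · rw [integral_Icc_eq_integral_Ioc]
      apply setIntegral_congr_fun measurableSet_Ioc
      intro u hu
      have hu0 : 0 ≤ u := hu.1.le
      simp only [gammaPDFReal, if_pos hu0]
      have : Real.Gamma ((k + 1 : ℕ) : ℝ) = Nat.factorial k := by
        push_cast; exact Real.Gamma_nat_eq_factorial k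
      rw [this]
      have h2 : ((k + 1 : ℕ) : ℝ) - 1 = k := by push_cast; ring
      rw [h2, Real.rpow_natCast]
      simp
      ring
    · intro x hx
      have : ¬ 0 ≤ x := fun h => hx.2 ⟨h, hx.1⟩
      simp [gammaPDFReal, this]
  have hI : ∫ u in (0 : ℝ)..t, u ^ k / (Nat.factorial k : ℝ)
      = t ^ (k + 1) / (Nat.factorial (k + 1) : ℝ) := by
    rw [intervalIntegral.integral_div, integral_pow, Nat.factorial_succ]
    push_cast
    have : (Nat.factorial k : ℝ) ≠ 0 := by positivity
    have : (k : ℝ) + 1 ≠ 0 := by positivity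
    field_simp
    simp
  rw [hF, ← hI]
  constructor
  · rw [← intervalIntegral.integral_const_mul]
    apply intervalIntegral.integral_mono_on ht
    · apply Continuous.intervalIntegrable; fun_prop
    · apply Continuous.intervalIntegrable; fun_prop
    · intro u hu
      have : Real.exp (-t) ≤ Real.exp (-u) := Real.exp_le_exp.2 (by linarith [hu.2])
      have h0 : 0 ≤ u ^ k := pow_nonneg hu.1 _
      rw [← mul_div_assoc, mul_comm]
      gcongr
  · apply intervalIntegral.integral_mono_on ht
    · apply Continuous.intervalIntegrable; fun_prop
    · apply Continuous.intervalIntegrable; fun_prop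
    · intro u hu
      have : Real.exp (-u) ≤ 1 := Real.exp_le_one_iff.2 (by linarith [hu.1])
      have h0 : 0 ≤ u ^ k := pow_nonneg hu.1 _
      gcongr
      nlinarith

lemma event_eq (j : ℕ) (α : ℝ) (hα : 0 < α) (a x : ℝ) (ha : 0 ≤ a) (hx : 0 < x) :
    gammaMeasure (j : ℝ) 1 {g | x < a * g ^ (-(1 / α))}
      = gammaMeasure (j : ℝ) 1 (Iio ((a / x) ^ α)) := by
  apply measure_congr
  filter_upwards [gamma_ae_pos j 1] with g hg
  apply propext
  change x < a * g ^ (-(1 / α)) ↔ g < (a / x) ^ α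
  have hp : 0 < g ^ (1 / α) := Real.rpow_pos_of_pos hg _
  rw [Real.rpow_neg hg.le, ← div_eq_mul_inv, lt_div_iff₀ hp, mul_comm, ← lt_div_iff₀ hx, one_div,
    Real.rpow_inv_lt_iff_of_pos hg.le (div_nonneg ha hx.le) hα]

lemma scale_bounds (j : ℕ) (hj : 0 < j) (α : ℝ) (hα : 0 < α) (a x : ℝ) (ha : 0 ≤ a) (hx : 0 < x) :
    Real.exp (-((a / x) ^ α)) * (a ^ ((j : ℝ) * α) / (Nat.factorial j : ℝ)) ≤
      x ^ ((j : ℝ) * α) * (gammaMeasure (j : ℝ) 1 {g | x < a * g ^ (-(1 / α))}).toReal ∧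
    x ^ ((j : ℝ) * α) * (gammaMeasure (j : ℝ) 1 {g | x < a * g ^ (-(1 / α))}).toReal ≤
      a ^ ((j : ℝ) * α) / (Nat.factorial j : ℝ) := by
  rw [event_eq j α hα a x ha hx]
  have hax : 0 ≤ a / x := div_nonneg ha hx.le
  obtain ⟨h1, h2⟩ := gamma_Iio_bounds j hj ((a / x) ^ α) (Real.rpow_nonneg hax _)
  have hxp : 0 < x ^ ((j : ℝ) * α) := Real.rpow_pos_of_pos hx _
  have key : x ^ ((j : ℝ) * α) * ((a / x) ^ α) ^ j = a ^ ((j : ℝ) * α) := by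
    rw [← Real.rpow_natCast, ← Real.rpow_mul hax, mul_comm α, Real.div_rpow ha hx.le]
    field_simp
  rw [← key]
  constructor
  · calc _ = x ^ ((j : ℝ) * α) * _ := by rw [mul_div_assoc, mul_left_comm]
      _ ≤ _ := mul_le_mul_of_nonneg_left h1 hxp.le
  · rw [mul_div_assoc]
    exact mul_le_mul_of_nonneg_left h2 hxp.le

/-- Let `j ≥ 1`, `α > 0`, `Γ` a Gamma(j,1)-distributed random variable,
and `A ≥ 0` independent of `Γ` with `E[A^(jα+δ)] < ∞` for some `δ > 0`.  Then
`x^(jα) · P(A·Γ^(−1/α) > x) → E[A^(jα)] / j!` as `x → ∞`. -/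
theorem stmt10 {Ω : Type*} [MeasurableSpace Ω] (μ : Measure Ω) [IsProbabilityMeasure μ]
    (j : ℕ) (hj : 0 < j) (α : ℝ) (hα : 0 < α)
    (Γ : Ω → ℝ) (hΓmeas : Measurable Γ)
    (hΓ : Measure.map Γ μ = gammaMeasure (j : ℝ) 1)
    (A : Ω → ℝ) (hAmeas : Measurable A) (hApos : ∀ ω, 0 ≤ A ω)
    (hindep : IndepFun A Γ μ)
    (hmom : ∃ δ : ℝ, 0 < δ ∧ Integrable (fun ω => A ω ^ ((j : ℝ) * α + δ)) μ) :
    Tendsto (fun x : ℝ => x ^ ((j : ℝ) * α) *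
        (μ {ω | x < A ω * Γ ω ^ (-(1 / α))}).toReal) atTop
      (𝓝 ((∫ ω, A ω ^ ((j : ℝ) * α) ∂μ) / (Nat.factorial j : ℝ))) := by
  have hj' : (0 : ℝ) < j := by exact_mod_cast hj
  haveI := isProbabilityMeasure_gammaMeasure hj' one_pos
  have hS : ∀ x : ℝ, MeasurableSet {p : ℝ × ℝ | x < p.1 * p.2 ^ (-(1 / α))} := fun x =>
    measurableSet_lt measurable_const (measurable_fst.mul (measurable_snd.pow_const _))
  have hmeas : ∀ x : ℝ, Measurable
      (fun ω => gammaMeasure (j : ℝ) 1 {g | x < A ω * g ^ (-(1 / α))}) := fun x =>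
    (measurable_measure_prodMk_left (ν := gammaMeasure (j : ℝ) 1) (hS x)).comp hAmeas
  have hprob : ∀ x : ℝ, (μ {ω | x < A ω * Γ ω ^ (-(1 / α))}).toReal
      = ∫ ω, (gammaMeasure (j : ℝ) 1 {g | x < A ω * g ^ (-(1 / α))}).toReal ∂μ := by
    intro x
    rw [integral_toReal (hmeas x).aemeasurable (Eventually.of_forall fun _ => measure_lt_top _ _)]
    congr 1
    have h1 := (indepFun_iff_map_prod_eq_prod_map_map hAmeas.aemeasurable
      hΓmeas.aemeasurable).1 hindep
    have h2 : μ {ω | x < A ω * Γ ω ^ (-(1 / α))}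
        = (μ.map fun ω => (A ω, Γ ω)) {p : ℝ × ℝ | x < p.1 * p.2 ^ (-(1 / α))} := by
      rw [Measure.map_apply (hAmeas.prodMk hΓmeas) (hS x)]; rfl
    rw [h2, h1, hΓ, Measure.prod_apply (hS x),
      lintegral_map (measurable_measure_prodMk_left (hS x)) hAmeas]
    rfl
  have hint : Integrable (fun ω => A ω ^ ((j : ℝ) * α)) μ := by
    obtain ⟨δ, hδ, hi⟩ := hmom
    refine ((integrable_const (1 : ℝ)).add hi).mono' (hAmeas.pow_const _).aestronglyMeasurable ?_
    refine Eventually.of_forall fun ω => ?_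
    have h0 := hApos ω
    have hp : 0 < (j : ℝ) * α := by positivity
    rw [Real.norm_of_nonneg (Real.rpow_nonneg h0 _)]
    simp only [Pi.add_apply]
    rcases le_total (A ω) 1 with h | h
    · have := Real.rpow_le_one h0 h hp.le
      have := Real.rpow_nonneg h0 ((j : ℝ) * α + δ)
      linarith
    · have := Real.rpow_le_rpow_of_exponent_le h (by linarith : (j : ℝ) * α ≤ (j : ℝ) * α + δ)
      linarith
  simp_rw [hprob, ← integral_const_mul]
  rw [← integral_div]
  refine tendsto_integral_filter_of_dominated_convergence
    (fun ω => A ω ^ ((j : ℝ) * α) / (Nat.factorial j : ℝ)) ?_ ?_ (hint.div_const _) ?_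
  · exact Eventually.of_forall fun x =>
      ((hmeas x).ennreal_toReal.const_mul _).aestronglyMeasurable
  · filter_upwards [eventually_gt_atTop 0] with x hx
    refine Eventually.of_forall fun ω => ?_
    rw [Real.norm_of_nonneg (by positivity)]
    exact (scale_bounds j hj α hα _ x (hApos ω) hx).2
  · refine Eventually.of_forall fun ω => ?_
    have hlim : Tendsto (fun x : ℝ => Real.exp (-((A ω / x) ^ α)) *
        (A ω ^ ((j : ℝ) * α) / (Nat.factorial j : ℝ))) atTop
        (𝓝 (A ω ^ ((j : ℝ) * α) / (Nat.factorial j : ℝ))) := by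
      have h1 : Tendsto (fun x : ℝ => A ω / x) atTop (𝓝 0) := tendsto_const_nhds.div_atTop tendsto_id
      have h2 := h1.rpow_const (p := α) (Or.inr hα.le)
      rw [Real.zero_rpow hα.ne'] at h2
      have h3 := ((Real.continuous_exp.tendsto _).comp h2.neg).mul_const
        (A ω ^ ((j : ℝ) * α) / (Nat.factorial j : ℝ))
      simpa using h3
    refine tendsto_of_tendsto_of_tendsto_of_le_of_le' hlim tendsto_const_nhds ?_ ?_
    · filter_upwards [eventually_gt_atTop 0] with x hx
      exact (scale_bounds j hj α hα _ x (hApos ω) hx).1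
    · filter_upwards [eventually_gt_atTop 0] with x hx
      exact (scale_bounds j hj α hα _ x (hApos ω) hx).2
end

section
/- Let α > 0, let X be a random variable with the exponential distribution of rate 1, and let A ≥ 0 be a random variable independent of X with E[A^{α+δ}] < ∞ for some δ > 0. Then lim_{x→∞} x^{α} · P(A·X^{−1/α} > x and X^{−1/α} > x) = E[A^{α}·1_{{A ≤ 1}}] + P(A > 1). -/
open Set Filter Topology MeasureTheory ProbabilityTheory

lemma aux_noAtoms : NullSingletonClass (expMeasure 1) := by
  constructor
  intro x
  have h : expMeasure 1 ≪ volume := by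
    unfold expMeasure gammaMeasure
    exact withDensity_absolutelyContinuous _ _
  exact h (by simp)

lemma aux_pos : ∀ᵐ u ∂(expMeasure 1), (0:ℝ) < u := by
  have := isProbabilityMeasure_expMeasure (r := 1) one_pos
  have h := cdf_expMeasure_eq (r := 1) one_pos 0
  rw [cdf_eq_real] at h
  simp only [le_refl, if_true, mul_zero, neg_zero, Real.exp_zero, sub_self] at h
  rw [measureReal_eq_zero_iff] at h
  rw [ae_iff]
  convert h using 2
  ext u; simp

lemma aux_Iio (t : ℝ) (ht : 0 ≤ t) :
    expMeasure 1 (Iio t) = ENNReal.ofReal (1 - Real.exp (-t)) := by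
  have := isProbabilityMeasure_expMeasure (r := 1) one_pos
  have := aux_noAtoms
  have h := cdf_expMeasure_eq (r := 1) one_pos t
  rw [cdf_eq_real] at h
  rw [measure_congr Iio_ae_eq_Iic, ← ofReal_measureReal, h]
  simp [ht]

lemma aux_section (α : ℝ) (hα : 0 < α) (x : ℝ) (hx : 0 < x) (a : ℝ) (ha : 0 ≤ a) :
    expMeasure 1 {u : ℝ | x < a * u ^ (-(1 / α)) ∧ x < u ^ (-(1 / α))}
      = ENNReal.ofReal (1 - Real.exp (-((min a 1) ^ α * (x ^ α)⁻¹))) := by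
  have hm : 0 ≤ min a 1 := le_min ha zero_le_one
  have hk : (min a 1) ^ α * (x ^ α)⁻¹ = (min a 1 / x) ^ α := by
    rw [Real.div_rpow hm hx.le]; rfl
  rw [hk, ← aux_Iio _ (by positivity)]
  apply measure_congr
  filter_upwards [aux_pos] with u hu
  have hy : 0 < u ^ (1 / α) := Real.rpow_pos_of_pos hu _
  have key : (x < a * u ^ (-(1 / α)) ∧ x < u ^ (-(1 / α))) ↔ u < (min a 1 / x) ^ α := by
    rw [Real.rpow_neg hu.le, ← div_eq_mul_inv, lt_div_iff₀ hy, ← one_div (u ^ _), lt_div_iff₀ hy,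
      ← lt_min_iff, mul_comm, ← lt_div_iff₀ hx, one_div,
      Real.rpow_inv_lt_iff_of_pos hu.le (by positivity) hα]
  exact propext key

lemma aux_lim (c : ℝ) (α : ℝ) (hα : 0 < α) :
    Tendsto (fun x : ℝ => x ^ α * (1 - Real.exp (-(c * (x ^ α)⁻¹)))) atTop (𝓝 c) := by
  have hd : HasDerivAt (fun s : ℝ => 1 - Real.exp (-(c * s))) c 0 := by
    have h1 : HasDerivAt (fun s : ℝ => -(c * s)) (-(c * 1)) 0 :=
      ((hasDerivAt_id (0:ℝ)).const_mul c).neg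
    have := h1.exp.const_sub 1
    simpa using this
  have hs := hd.tendsto_slope_zero_right
  have ht : Tendsto (fun x : ℝ => (x ^ α)⁻¹) atTop (𝓝[>] 0) :=
    tendsto_inv_atTop_nhdsGT_zero.comp (tendsto_rpow_atTop hα)
  refine (hs.comp ht).congr fun x => ?_
  simp

theorem stmt11 {Ω : Type*} [MeasurableSpace Ω] (μ : Measure Ω) [IsProbabilityMeasure μ]
    (α : ℝ) (hα : 0 < α)
    (X : Ω → ℝ) (hXmeas : Measurable X)
    (hX : Measure.map X μ = expMeasure 1)
    (A : Ω → ℝ) (hAmeas : Measurable A) (hApos : ∀ ω, 0 ≤ A ω)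
    (hindep : IndepFun A X μ)
    (hmom : ∃ δ : ℝ, 0 < δ ∧ Integrable (fun ω => A ω ^ (α + δ)) μ) :
    Tendsto (fun x : ℝ => x ^ α *
        (μ {ω | x < A ω * X ω ^ (-(1 / α)) ∧ x < X ω ^ (-(1 / α))}).toReal) atTop
      (𝓝 ((∫ ω in {ω | A ω ≤ 1}, A ω ^ α ∂μ) + (μ {ω | 1 < A ω}).toReal)) := by
  have := isProbabilityMeasure_expMeasure (r := 1) one_pos
  have hm : ∀ ω, 0 ≤ min (A ω) 1 := fun ω => le_min (hApos ω) zero_le_one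
  have hmα : ∀ ω, 0 ≤ (min (A ω) 1) ^ α := fun ω => Real.rpow_nonneg (hm ω) _
  have hmα1 : ∀ ω, (min (A ω) 1) ^ α ≤ 1 := fun ω =>
    Real.rpow_le_one (hm ω) (min_le_right _ _) hα.le
  have hmeas : Measurable fun ω => (min (A ω) 1) ^ α := by fun_prop
  have hint : Integrable (fun ω => (min (A ω) 1) ^ α) μ := by
    refine Integrable.of_bound hmeas.aestronglyMeasurable 1 (ae_of_all _ fun ω => ?_)
    rw [Real.norm_of_nonneg (hmα ω)]; exact hmα1 ω
  -- the limit
  have hlim : (∫ ω in {ω | A ω ≤ 1}, A ω ^ α ∂μ) + (μ {ω | 1 < A ω}).toReal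
      = ∫ ω, (min (A ω) 1) ^ α ∂μ := by
    have hS : MeasurableSet {ω | A ω ≤ 1} := measurableSet_le hAmeas measurable_const
    have hc : {ω | A ω ≤ 1}ᶜ = {ω | 1 < A ω} := by ext; simp
    rw [← integral_add_compl hS hint, hc]
    congr 1
    · refine setIntegral_congr_fun hS fun ω hω => ?_
      simp only [mem_ofPred_eq] at hω
      simp [min_eq_left hω]
    · have : ∫ ω in {ω | 1 < A ω}, (min (A ω) 1) ^ α ∂μ = ∫ ω in {ω | 1 < A ω}, (1:ℝ) ∂μ := by
        refine setIntegral_congr_fun (hc ▸ hS.compl) fun ω hω => ?_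
        simp only [mem_ofPred_eq] at hω
        simp [min_eq_right hω.le]
      rw [this]; simp [Measure.real]
  have hprob : ∀ x : ℝ, 0 < x →
      (μ {ω | x < A ω * X ω ^ (-(1 / α)) ∧ x < X ω ^ (-(1 / α))}).toReal
        = ∫ ω, (1 - Real.exp (-((min (A ω) 1) ^ α * (x ^ α)⁻¹))) ∂μ := by
    intro x hx
    have hxα : 0 < x ^ α := Real.rpow_pos_of_pos hx _
    have hS : MeasurableSet {p : ℝ × ℝ | x < p.1 * p.2 ^ (-(1 / α)) ∧ x < p.2 ^ (-(1 / α))} :=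
      MeasurableSet.inter
        (measurableSet_lt measurable_const (by fun_prop) :
          MeasurableSet {p : ℝ × ℝ | x < p.1 * p.2 ^ (-(1 / α))})
        (measurableSet_lt measurable_const (by fun_prop) :
          MeasurableSet {p : ℝ × ℝ | x < p.2 ^ (-(1 / α))})
    have h1 := (indepFun_iff_map_prod_eq_prod_map_map hAmeas.aemeasurable
      hXmeas.aemeasurable).1 hindep
    rw [hX] at h1
    have h2 : μ {ω | x < A ω * X ω ^ (-(1 / α)) ∧ x < X ω ^ (-(1 / α))}
        = ∫⁻ ω, ENNReal.ofReal (1 - Real.exp (-((min (A ω) 1) ^ α * (x ^ α)⁻¹))) ∂μ := by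
      have h3 := Measure.map_apply (μ := μ) (hAmeas.prodMk hXmeas) hS
      rw [h1, Measure.prod_apply hS, lintegral_map (measurable_measure_prodMk_left hS) hAmeas] at h3
      refine h3.symm.trans (lintegral_congr fun ω => ?_)
      exact aux_section α hα x hx (A ω) (hApos ω)
    rw [h2, integral_eq_lintegral_of_nonneg_ae]
    · refine ae_of_all _ fun ω => ?_
      have : 0 ≤ (min (A ω) 1) ^ α * (x ^ α)⁻¹ := mul_nonneg (hmα ω) (by positivity)
      simpa using this
    · exact Measurable.aestronglyMeasurable (by fun_prop)
  rw [hlim]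
  have hD : Tendsto (fun x : ℝ => ∫ ω, x ^ α *
      (1 - Real.exp (-((min (A ω) 1) ^ α * (x ^ α)⁻¹))) ∂μ) atTop
      (𝓝 (∫ ω, (min (A ω) 1) ^ α ∂μ)) := by
    refine tendsto_integral_filter_of_dominated_convergence (fun _ => 1) ?_ ?_
      (integrable_const _) (ae_of_all _ fun ω => aux_lim _ α hα)
    · exact Eventually.of_forall fun x => Measurable.aestronglyMeasurable (by fun_prop)
    · filter_upwards [eventually_gt_atTop 0] with x hx
      refine ae_of_all _ fun ω => ?_
      have hxα : 0 < x ^ α := Real.rpow_pos_of_pos hx _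
      have h0 : 0 ≤ (min (A ω) 1) ^ α * (x ^ α)⁻¹ := mul_nonneg (hmα ω) (by positivity)
      have h1 : 0 ≤ 1 - Real.exp (-((min (A ω) 1) ^ α * (x ^ α)⁻¹)) := by
        simpa using h0
      have h2 := Real.add_one_le_exp (-((min (A ω) 1) ^ α * (x ^ α)⁻¹))
      rw [Real.norm_of_nonneg (mul_nonneg hxα.le h1)]
      calc x ^ α * (1 - Real.exp (-((min (A ω) 1) ^ α * (x ^ α)⁻¹)))
          ≤ x ^ α * ((min (A ω) 1) ^ α * (x ^ α)⁻¹) :=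
            mul_le_mul_of_nonneg_left (by linarith) hxα.le
        _ = (min (A ω) 1) ^ α := by field_simp
        _ ≤ 1 := hmα1 ω
  refine hD.congr' ?_
  filter_upwards [eventually_gt_atTop 0] with x hx
  rw [hprob x hx, integral_const_mul]
end
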